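/- Let f : ℝ^d → ℝ be integrable on [0,1)^d and let 𝒬 be a finite partition of [0,1)^d into measurable sets of positive Lebesgue measure. Fix η > 0 and suppose that for every q ∈ 𝒬 and every t > 0, μ({ a ∈ q : |f(a) − ⟨f⟩_q| > t }) ≤ μ(q) e^{−t}. Let δ > η·|𝒬| be f-admissible with associated value f^δ. Then there exists q ∈ 𝒬 such that f^δ ≤ ⟨f⟩_q + log( μ(q) / η ). -/

import Mathlib

open MeasureTheory Set
open scoped ENNReal

/-- The half-open unit cube `[0,1)^d` in `ℝ^d`. -/
def unitCube (d : ℕ) : Set (Fin d → ℝ) := Set.univ.pi fun _ => Set.Ico (0 : ℝ) 1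

/-!
If no cell `q` satisfied the bound at the level `s = f^δ`, then `s` would exceed the average over
`q` by more than `log (μ q / η)`, a threshold chosen so that the exponential tail bound caps the
part of `q` where `f > s` at `μ q * exp (-log (μ q / η)) = η`. Cells with `μ q ≤ η` obey this cap
trivially. Summing over the cells gives `δ ≤ η |𝒬|`, a contradiction.
-/

theorem volume_unitCube (d : ℕ) : volume (unitCube d) = 1 := by
  simp [unitCube, Real.volume_pi_Ico]

section MeasureSpace

variable {α ι : Type*} [MeasurableSpace α] {μ : Measure α} {f : α → ℝ} {A q : Set α}

theorem le_measure_superlevel_sInf {m : ℝ≥0∞} {F : Set ℝ} (hne : F.Nonempty) (hbdd : BddBelow F)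
    (hF : ∀ z ∈ F, m ≤ μ {a ∈ A | z < f a}) : m ≤ μ {a ∈ A | sInf F < f a} := by
  obtain ⟨z, hz⟩ := hne
  exact (hF z hz).trans (measure_mono fun a ha => ⟨ha.1, (csInf_le hbdd hz).trans_lt ha.2⟩)

theorem exists_lt_measure_inter_of_card_mul_lt {T : Finset ι} {cell : ι → Set α} {ε : ℝ≥0∞}
    (hcover : A ⊆ ⋃ i ∈ T, cell i) (hlt : T.card * ε < μ A) : ∃ i ∈ T, ε < μ (cell i ∩ A) := by
  refine Finset.exists_lt_of_sum_lt ?_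
  calc ∑ _i ∈ T, ε = T.card * ε := by rw [Finset.sum_const, nsmul_eq_mul]
    _ < μ A := hlt
    _ ≤ μ (⋃ i ∈ T, cell i ∩ A) := by
      rw [← iUnion₂_inter, inter_eq_right.mpr hcover]
    _ ≤ ∑ i ∈ T, μ (cell i ∩ A) := measure_biUnion_finset_le _ _

theorem measure_add_lt_le_measure_lt_abs_sub (c t : ℝ) :
    μ {a ∈ q | c + t < f a} ≤ μ {a ∈ q | t < |f a - c|} :=
  measure_mono fun _ ha => ⟨ha.1, (lt_sub_iff_add_lt'.mpr ha.2).trans_le (le_abs_self _)⟩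

theorem measure_mul_ofReal_exp_neg_log_div {η : ℝ} (hη : 0 < η) (hq : 0 < μ.real q) :
    μ q * ENNReal.ofReal (Real.exp (-Real.log (μ.real q / η))) = ENNReal.ofReal η := by
  have hfin : μ q ≠ ∞ := (ENNReal.toReal_pos_iff.mp hq).2.ne
  rw [Real.exp_neg, Real.exp_log (div_pos hq hη), inv_div, ← ofReal_measureReal hfin,
    ← ENNReal.ofReal_mul hq.le, mul_div_cancel₀ _ hq.ne']

theorem le_add_log_of_lt_measure_superlevel {c s η : ℝ} (hη : 0 < η) (hηq : η < μ.real q)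
    (htail : ∀ t : ℝ, 0 < t →
      μ {a ∈ q | c + t < f a} ≤ μ q * ENNReal.ofReal (Real.exp (-t)))
    (hs : ENNReal.ofReal η < μ {a ∈ q | s < f a}) :
    s ≤ c + Real.log (μ.real q / η) := by
  by_contra! hlt
  have hlog : 0 < Real.log (μ.real q / η) := Real.log_pos ((one_lt_div hη).mpr hηq)
  refine hs.not_ge ?_
  calc μ {a ∈ q | s < f a}
      ≤ μ {a ∈ q | c + Real.log (μ.real q / η) < f a} :=
        measure_mono fun a ha => ⟨ha.1, hlt.trans ha.2⟩
    _ ≤ μ q * ENNReal.ofReal (Real.exp (-Real.log (μ.real q / η))) := htail _ hlog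
    _ = ENNReal.ofReal η := measure_mul_ofReal_exp_neg_log_div hη (hη.trans hηq)

theorem stmt4_general {T : Finset ι} {cell : ι → Set α} {c : ι → ℝ} {η δ : ℝ}
    (hfin : ∀ i ∈ T, μ (cell i) ≠ ∞) (hcover : A ⊆ ⋃ i ∈ T, cell i) (hη : 0 < η)
    (htail : ∀ i ∈ T, ∀ t : ℝ, 0 < t →
      μ {a ∈ cell i | c i + t < f a} ≤ μ (cell i) * ENNReal.ofReal (Real.exp (-t)))
    (hδ : η * T.card < δ) {F : Set ℝ} (hne : F.Nonempty) (hbdd : BddBelow F)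
    (hF : ∀ z ∈ F, ENNReal.ofReal δ ≤ μ {a ∈ A | z < f a}) :
    ∃ i ∈ T, η < μ.real (cell i) ∧ sInf F ≤ c i + Real.log (μ.real (cell i) / η) := by
  have hcard : T.card * ENNReal.ofReal η < μ {a ∈ A | sInf F < f a} :=
    calc T.card * ENNReal.ofReal η = ENNReal.ofReal (η * T.card) := by
          rw [ENNReal.ofReal_mul hη.le, ENNReal.ofReal_natCast, mul_comm]
      _ < ENNReal.ofReal δ := (ENNReal.ofReal_lt_ofReal_iff_of_nonneg (by positivity)).mpr hδ
      _ ≤ μ {a ∈ A | sInf F < f a} := le_measure_superlevel_sInf hne hbdd hF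
  obtain ⟨i, hi, hlt⟩ :=
    exists_lt_measure_inter_of_card_mul_lt ((sep_subset _ _).trans hcover) hcard
  have hcell : η < μ.real (cell i) :=
    (ENNReal.ofReal_lt_iff_lt_toReal hη.le (hfin i hi)).mp
      (hlt.trans_le (measure_mono inter_subset_left))
  exact ⟨i, hi, hcell, le_add_log_of_lt_measure_superlevel hη hcell (htail i hi)
    (hlt.trans_le (measure_mono fun _ ha => ⟨ha.1, ha.2.2⟩))⟩

end MeasureSpace

/-- Let `f` be integrable on `[0,1)^d` and `𝒬` a finite partition of
`[0,1)^d` into measurable sets of positive measure. Fix `η > 0` and suppose the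
John–Nirenberg tail bound `μ {a ∈ q | |f a − ⟨f⟩_q| > t} ≤ μ(q) e^{−t}` holds for every
`q ∈ 𝒬` and `t > 0`. Then for every `f`-admissible `δ > η |𝒬|` with associated value
`f^δ`, there is `q ∈ 𝒬` with `f^δ ≤ ⟨f⟩_q + log(μ(q)/η)`. -/
theorem stmt4 (d : ℕ) (f : (Fin d → ℝ) → ℝ)
    (hf : IntegrableOn f (unitCube d) volume)
    (𝒬 : Finset (Set (Fin d → ℝ)))
    (hmeas : ∀ q ∈ 𝒬, MeasurableSet q)
    (hpos : ∀ q ∈ 𝒬, 0 < volume q)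
    (hdisj : ∀ q ∈ 𝒬, ∀ q' ∈ 𝒬, q ≠ q' → Disjoint q q')
    (hcover : ⋃ q ∈ 𝒬, q = unitCube d)
    (η : ℝ) (hη : 0 < η)
    (hJN : ∀ q ∈ 𝒬, ∀ t : ℝ, 0 < t →
      volume {a ∈ q | |f a - ⨍ y in q, f y| > t} ≤ volume q * ENNReal.ofReal (Real.exp (-t)))
    (δ : ℝ) (hδ : δ > η * 𝒬.card)
    (Fδ : Set ℝ)
    (hFδ : Fδ = {z : ℝ | volume {a ∈ unitCube d | f a > z} = ENNReal.ofReal δ})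
    (hne : Fδ.Nonempty) (hbdd : BddBelow Fδ) :
    ∃ q ∈ 𝒬, sInf Fδ ≤ (⨍ x in q, f x) + Real.log ((volume q).toReal / η) := by
  subst hFδ
  have hfin : ∀ q ∈ 𝒬, volume q ≠ ∞ := fun q hq =>
    measure_ne_top_of_subset (hcover ▸ subset_biUnion_of_mem (u := id) hq)
      (volume_unitCube d ▸ ENNReal.one_ne_top)
  obtain ⟨q, hq, -, hle⟩ := stmt4_general (cell := id) hfin hcover.ge hη
    (fun q hq t ht => (measure_add_lt_le_measure_lt_abs_sub _ t).trans (hJN q hq t ht))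
    hδ hne hbdd fun _ hz => ge_of_eq hz
  exact ⟨q, hq, hle⟩
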